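/- (Theorem 5) Let k ≥ 1 and for each i ∈ Fin k let B_i be a partial matrix over a field F with finite row index m_i and finite column index n_i, and let v_i be a partial column on rows m_i. Let M be the partial matrix on rows Σ i, m_i and columns Unit ⊕ (Σ i, n_i) whose first column is the stacked partial column (v_1; …; v_k), whose (i, i) diagonal block among the remaining columns is B_i, and all of whose other entries are unknown. Assume the stacked column (v_1; …; v_k) is not a junk column, i.e., some v_i has a known entry that is nonzero. Then mr(M) = max over i ∈ Fin k of ( mr([v_i | B_i]) + zero(v_i, B_i) ). -/

import Mathlib

/-- `N` is a completion of the partial matrix `(M, Ω)`: it agrees with `M`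
on all known positions `Ω`. -/
def IsCompletion {F m n : Type*} [Field F] (M : Matrix m n F) (Ω : Set (m × n))
    (N : Matrix m n F) : Prop :=
  ∀ p ∈ Ω, N p.1 p.2 = M p.1 p.2

/-- The minimum rank of the partial matrix `(M, Ω)`: the minimum of the ranks of
its completions. -/
noncomputable def mr {F m n : Type*} [Field F] [Fintype m] [Fintype n]
    (M : Matrix m n F) (Ω : Set (m × n)) : ℕ :=
  sInf {r | ∃ N : Matrix m n F, IsCompletion M Ω N ∧ N.rank = r}

/-- The partial matrix `[u | A]`: the partial column `u` (with known row set `Ωu`)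
adjoined as an extra (first) column to `A`. -/
def augMat {F m n : Type*} [Field F] (u : m → F) (A : Matrix m n F) :
    Matrix m (Unit ⊕ n) F :=
  Matrix.of fun i => Sum.elim (fun _ => u i) (A i)

/-- Known positions of the partial matrix `[u | A]`, inherited from `Ωu` and `ΩA`. -/
def augSet {m n : Type*} (Ωu : Set m) (ΩA : Set (m × n)) : Set (m × (Unit ⊕ n)) :=
  {p | Sum.elim (fun _ => p.1 ∈ Ωu) (fun j => (p.1, j) ∈ ΩA) p.2}

/-- `zero (u, A) = 1`, as a proposition: every completion of `[u | A]` attaining the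
minimum rank has zero `u`-column. -/
def zeroProp {F m n : Type*} [Field F] [Fintype m] [Fintype n]
    (u : m → F) (Ωu : Set m) (A : Matrix m n F) (ΩA : Set (m × n)) : Prop :=
  ∀ N : Matrix m (Unit ⊕ n) F, IsCompletion (augMat u A) (augSet Ωu ΩA) N →
    N.rank = mr (augMat u A) (augSet Ωu ΩA) → ∀ i, N i (Sum.inl ()) = 0
open Classical in
/-- `zero (u, A)` as a natural number: `1` if every minimum-rank completion of
`[u | A]` has zero `u`-column, and `0` otherwise. -/
noncomputable def zeroNat {F m n : Type*} [Field F] [Fintype m] [Fintype n]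
    (u : m → F) (Ωu : Set m) (A : Matrix m n F) (ΩA : Set (m × n)) : ℕ :=
  if zeroProp u Ωu A ΩA then 1 else 0

/-!
The well-behaved invariant of `[u | A]` is `mr + zero`, always positive. For `s : ℕ` one has
`mr [u | A] + zero (u, A) ≤ s + 1` iff some completion `[c | D]` satisfies
`rank [c | D] ≤ rank c + s`, that is, iff modulo the column `c` the columns of `D` span a space of
dimension at most `s`. This amounts to a factorization `D = c * Z + U * X` with `U` having `s`
columns. Such factorizations restrict to the diagonal blocks, and conversely factorizations of all
the blocks glue by stacking the `c`s and `U`s and juxtaposing the `Z`s and `X`s; the off-diagonal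
entries produced on the way are harmless because those positions are unknown. Hence `mr + zero` of
the whole matrix is the maximum of `mr + zero` over the blocks, and `zero` of the whole matrix
vanishes when its first column has a nonzero known entry.
-/

open Matrix

section MinimumRank

variable {F m n : Type*} [Field F] [Fintype m] [Fintype n] {M : Matrix m n F} {Ω : Set (m × n)}

theorem exists_isCompletion_rank_eq_mr (M : Matrix m n F) (Ω : Set (m × n)) :
    ∃ N, IsCompletion M Ω N ∧ N.rank = mr M Ω :=
  Nat.sInf_mem (s := {r | ∃ N : Matrix m n F, IsCompletion M Ω N ∧ N.rank = r})
    ⟨M.rank, M, fun _ _ => rfl, rfl⟩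

theorem mr_le_rank {N : Matrix m n F} (hN : IsCompletion M Ω N) : mr M Ω ≤ N.rank :=
  Nat.sInf_le ⟨N, hN, rfl⟩

end MinimumRank

section Rank

variable {F m n p q : Type*} [Field F] [Fintype n] [Fintype p] [Fintype q]

theorem matrix_rank_eq_zero_iff [Finite m] {A : Matrix m n F} : A.rank = 0 ↔ A = 0 := by
  rw [rank_eq_finrank_span_cols, Submodule.finrank_eq_zero, Submodule.span_eq_bot,
    Set.forall_mem_range]
  exact ⟨fun h => ext fun i j => congrFun (h j) i, by rintro rfl j; rfl⟩

theorem rank_fromCols_le [Finite m] (A : Matrix m p F) (B : Matrix m q F) :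
    (fromCols A B).rank ≤ A.rank + B.rank := by
  have hcol : (fromCols A B).col = Sum.elim A.col B.col := by
    ext (_ | _) _ <;> rfl
  rw [rank_eq_finrank_span_cols, rank_eq_finrank_span_cols, rank_eq_finrank_span_cols, hcol,
    Set.Sum.elim_range, Submodule.span_union]
  exact Submodule.finrank_add_le_finrank_add_finrank _ _

theorem range_mulVecLin_toCols₁_le (N : Matrix m (p ⊕ n) F) :
    LinearMap.range N.toCols₁.mulVecLin ≤ LinearMap.range N.mulVecLin := by
  simp only [range_mulVecLin]
  exact Submodule.span_mono (Set.range_comp_subset_range Sum.inl N.col)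

theorem exists_le_range_mulVecLin [Finite m] (C : Submodule F (m → F)) {s : ℕ}
    (hC : Module.finrank F C ≤ s) :
    ∃ U : Matrix m (Fin s) F, C ≤ LinearMap.range U.mulVecLin := by
  obtain ⟨f, -, hspan, -⟩ := Submodule.exists_fun_fin_finrank_span_eq F (C : Set (m → F))
  have hd : Module.finrank F (Submodule.span F (C : Set (m → F))) ≤ s := by rwa [C.span_eq]
  let g : Fin s → m → F := Function.extend (Fin.castLE hd) f 0
  refine ⟨(of g)ᵀ, ?_⟩
  calc C = Submodule.span F (Set.range (g ∘ Fin.castLE hd)) := by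
        rw [Function.extend_comp (Fin.castLE_injective hd), hspan, C.span_eq]
    _ ≤ Submodule.span F (Set.range g) := Submodule.span_mono (Set.range_comp_subset_range _ _)
    _ = LinearMap.range ((of g)ᵀ).mulVecLin := (range_mulVecLin _).symm

theorem rank_le_rank_toCols₁_add_iff [Finite m] {N : Matrix m (p ⊕ n) F} {s : ℕ} :
    N.rank ≤ N.toCols₁.rank + s ↔
      ∃ (Z : Matrix p n F) (U : Matrix m (Fin s) F) (X : Matrix (Fin s) n F),
        N.toCols₂ = N.toCols₁ * Z + U * X := by
  classical
  constructor
  · intro hN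
    obtain ⟨C, hdisj, hsup⟩ :=
      IsModularLattice.exists_disjoint_and_sup_eq (range_mulVecLin_toCols₁_le N)
    have hC : Module.finrank F C ≤ s := by
      have hdim := Submodule.finrank_sup_add_finrank_inf_eq (LinearMap.range N.toCols₁.mulVecLin) C
      rw [hsup, hdisj.eq_bot, finrank_bot, add_zero] at hdim
      exact Nat.le_of_add_le_add_left (hdim.symm.trans_le hN)
    obtain ⟨U, hU⟩ := exists_le_range_mulVecLin C hC
    have hcol (j : n) : ∃ z x, N.col (Sum.inr j) = N.toCols₁ *ᵥ z + U *ᵥ x := by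
      have hj : N.col (Sum.inr j) ∈ LinearMap.range N.mulVecLin :=
        ⟨Pi.single (Sum.inr j) 1, mulVec_single_one N _⟩
      obtain ⟨_, ⟨z, rfl⟩, y, hy, hzy⟩ := Submodule.mem_sup.1 (hsup ▸ hj)
      obtain ⟨x, rfl⟩ := hU hy
      exact ⟨z, x, hzy.symm⟩
    choose z x hzx using hcol
    exact ⟨(of z)ᵀ, U, (of x)ᵀ, Matrix.ext fun i j => congrFun (hzx j) i⟩
  · rintro ⟨Z, U, X, h⟩
    have hN : N = fromCols N.toCols₁ U * fromBlocks 1 Z 0 X := by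
      rw [fromCols_mul_fromBlocks, ← h]
      simp
    calc N.rank ≤ (fromCols N.toCols₁ U).rank := by
          conv_lhs => rw [hN]
          exact rank_mul_le_left _ _
      _ ≤ N.toCols₁.rank + U.rank := rank_fromCols_le _ _
      _ ≤ N.toCols₁.rank + s := by
          gcongr
          simpa using U.rank_le_card_width

end Rank

section DiagonalBlocks

variable {F ι p : Type*} {m n : ι → Type*}

/-- The submatrix of `[v | A]` formed by the `i`-th part of the initial columns `v` and the `i`-th
diagonal block of `A`: the part on which a completion of the partial matrix of the theorem has to
complete `[vᵢ | Bᵢ]`. -/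
def diagBlock (L : Matrix (Σ i, m i) (p ⊕ Σ i, n i) F) (i : ι) : Matrix (m i) (p ⊕ n i) F :=
  L.submatrix (Sigma.mk i) (Sum.map id (Sigma.mk i))

theorem exists_diagBlock_eq_rank_le_iff [Field F] [Fintype ι] [Fintype p] [∀ i, Finite (m i)]
    [∀ i, Fintype (n i)] {N : ∀ i, Matrix (m i) (p ⊕ n i) F} {s : ℕ} :
    (∃ L : Matrix (Σ i, m i) (p ⊕ Σ i, n i) F,
      (∀ i, diagBlock L i = N i) ∧ L.rank ≤ L.toCols₁.rank + s) ↔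
    ∀ i, (N i).rank ≤ (N i).toCols₁.rank + s := by
  simp only [rank_le_rank_toCols₁_add_iff]
  constructor
  · rintro ⟨L, hL, Z, U, X, h⟩ i
    refine ⟨Z.submatrix id (Sigma.mk i), U.submatrix (Sigma.mk i) id, X.submatrix id (Sigma.mk i),
      ?_⟩
    rw [← hL i]
    exact congrArg (submatrix · (Sigma.mk i) (Sigma.mk i)) h
  · intro h
    choose Z U X h using h
    let c : Matrix (Σ i, m i) p F := of fun r => (N r.1).toCols₁ r.2
    let Z' : Matrix p (Σ i, n i) F := of fun t j => Z j.1 t j.2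
    let U' : Matrix (Σ i, m i) (Fin s) F := of fun r => U r.1 r.2
    let X' : Matrix (Fin s) (Σ i, n i) F := of fun t j => X j.1 t j.2
    refine ⟨fromCols c (c * Z' + U' * X'), fun i => ?_, Z', U', X', rfl⟩
    rw [← fromCols_toCols (N i), h i]
    ext r (_ | j) <;> rfl

end DiagonalBlocks

section FirstColumnZero

variable {F m n : Type*} [Field F] [Fintype m] [Fintype n] {M : Matrix m (Unit ⊕ n) F}
  {Ω : Set (m × (Unit ⊕ n))}

open Classical in
/-- The quantity `zero (u, A)` of a partial matrix `[u | A]` that is given as a whole, as `(M, Ω)`,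
rather than through `u` and `A`; it lets `zero` be applied to the large matrix of the theorem. -/
noncomputable def firstColZero (M : Matrix m (Unit ⊕ n) F) (Ω : Set (m × (Unit ⊕ n))) : ℕ :=
  if ∀ N, IsCompletion M Ω N → N.rank = mr M Ω → N.toCols₁ = 0 then 1 else 0

theorem zeroNat_eq_firstColZero (u : m → F) (Ωu : Set m) (A : Matrix m n F) (ΩA : Set (m × n)) :
    zeroNat u Ωu A ΩA = firstColZero (augMat u A) (augSet Ωu ΩA) := by
  have toCols₁_eq_zero_iff (N : Matrix m (Unit ⊕ n) F) :
      N.toCols₁ = 0 ↔ ∀ i, N i (Sum.inl ()) = 0 :=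
    ⟨fun h i => congrFun₂ h i (), fun h => ext fun i _ => h i⟩
  classical exact if_congr (forall₃_congr fun N _ _ => (toCols₁_eq_zero_iff N).symm) rfl rfl

theorem firstColZero_eq_zero_of_known_ne_zero {i : m} (hi : (i, Sum.inl ()) ∈ Ω)
    (hne : M i (Sum.inl ()) ≠ 0) : firstColZero M Ω = 0 := by
  refine if_neg fun hzero => hne ?_
  obtain ⟨N, hN, hrank⟩ := exists_isCompletion_rank_eq_mr M Ω
  rw [← hN _ hi]
  exact congrFun₂ (hzero N hN hrank) i ()

theorem one_le_mr_add_firstColZero (M : Matrix m (Unit ⊕ n) F) (Ω : Set (m × (Unit ⊕ n))) :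
    1 ≤ mr M Ω + firstColZero M Ω := by
  unfold firstColZero
  split_ifs with hzero
  · exact Nat.le_add_left _ _
  · push Not at hzero
    obtain ⟨N, -, hrank, hne⟩ := hzero
    rw [← hrank, add_zero, Nat.one_le_iff_ne_zero, Ne, matrix_rank_eq_zero_iff]
    rintro rfl
    exact hne rfl

theorem mr_add_firstColZero_le_succ_iff {s : ℕ} :
    mr M Ω + firstColZero M Ω ≤ s + 1 ↔
      ∃ N, IsCompletion M Ω N ∧ N.rank ≤ N.toCols₁.rank + s := by
  unfold firstColZero
  constructor
  · intro h
    split_ifs at h with hzero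
    · obtain ⟨N, hN, hrank⟩ := exists_isCompletion_rank_eq_mr M Ω
      exact ⟨N, hN, by omega⟩
    · push Not at hzero
      obtain ⟨N, hN, hrank, hne⟩ := hzero
      have : N.toCols₁.rank ≠ 0 := mt matrix_rank_eq_zero_iff.1 hne
      exact ⟨N, hN, by omega⟩
  · rintro ⟨N, hN, hrank⟩
    have hmr : mr M Ω ≤ N.rank := mr_le_rank hN
    have hcol : N.toCols₁.rank ≤ 1 := N.toCols₁.rank_le_card_width
    split_ifs with hzero
    · have : N.rank = mr M Ω → N.toCols₁.rank = 0 := fun h =>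
        matrix_rank_eq_zero_iff.2 (hzero N hN h)
      omega
    · omega

end FirstColumnZero

section SubUdiag

variable {F ι : Type*} {m n : ι → Type*}

/-- `(M, Ω)` is the partial matrix whose first column is the stacked partial column `v`, whose
diagonal blocks among the other columns are the partial matrices `B i`, and which has no other
known entry. The values of `M` at unknown off-diagonal positions are left unconstrained, since no
completion sees them. -/
structure IsSubUdiag (B : ∀ i, Matrix (m i) (n i) F) (ΩB : ∀ i, Set (m i × n i))
    (v : ∀ i, m i → F) (Ωv : ∀ i, Set (m i)) (M : Matrix (Σ i, m i) (Unit ⊕ Σ i, n i) F)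
    (Ω : Set ((Σ i, m i) × (Unit ⊕ Σ i, n i))) : Prop where
  col_apply (i : ι) (r : m i) : M ⟨i, r⟩ (Sum.inl ()) = v i r
  block_apply (i : ι) (r : m i) (c : n i) : M ⟨i, r⟩ (Sum.inr ⟨i, c⟩) = B i r c
  col_known_iff (p : Σ i, m i) : (p, Sum.inl ()) ∈ Ω ↔ p.2 ∈ Ωv p.1
  block_known_iff (p : Σ i, m i) (q : Σ i, n i) :
    (p, Sum.inr q) ∈ Ω ↔ ∃ h : p.1 = q.1, (h ▸ p.2, q.2) ∈ ΩB q.1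

variable [Field F] {B : ∀ i, Matrix (m i) (n i) F} {ΩB : ∀ i, Set (m i × n i)}
  {v : ∀ i, m i → F} {Ωv : ∀ i, Set (m i)} {M : Matrix (Σ i, m i) (Unit ⊕ Σ i, n i) F}
  {Ω : Set ((Σ i, m i) × (Unit ⊕ Σ i, n i))}

theorem IsSubUdiag.isCompletion_iff (h : IsSubUdiag B ΩB v Ωv M Ω)
    {L : Matrix (Σ i, m i) (Unit ⊕ Σ i, n i) F} :
    IsCompletion M Ω L ↔
      ∀ i, IsCompletion (augMat (v i) (B i)) (augSet (Ωv i) (ΩB i)) (diagBlock L i) := by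
  constructor
  · rintro hL i ⟨r, ⟨⟩ | c⟩ hknown
    · exact (hL (⟨i, r⟩, Sum.inl ()) ((h.col_known_iff _).2 hknown)).trans (h.col_apply i r)
    · exact (hL (⟨i, r⟩, Sum.inr ⟨i, c⟩) ((h.block_known_iff _ _).2 ⟨rfl, hknown⟩)).trans
        (h.block_apply i r c)
  · rintro hL ⟨⟨i, r⟩, ⟨⟩ | ⟨j, c⟩⟩ hknown
    · exact (hL i (r, Sum.inl ()) ((h.col_known_iff _).1 hknown)).trans (h.col_apply i r).symm
    · obtain ⟨rfl : i = j, hB⟩ := (h.block_known_iff _ _).1 hknown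
      exact (hL i (r, Sum.inr c) hB).trans (h.block_apply i r c).symm

theorem IsSubUdiag.mr_add_firstColZero_le_succ_iff_forall [Fintype ι] [∀ i, Fintype (m i)]
    [∀ i, Fintype (n i)] (h : IsSubUdiag B ΩB v Ωv M Ω) {s : ℕ} :
    mr M Ω + firstColZero M Ω ≤ s + 1 ↔
      ∀ i, mr (augMat (v i) (B i)) (augSet (Ωv i) (ΩB i)) +
        zeroNat (v i) (Ωv i) (B i) (ΩB i) ≤ s + 1 := by
  simp only [zeroNat_eq_firstColZero, mr_add_firstColZero_le_succ_iff, h.isCompletion_iff]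
  constructor
  · rintro ⟨L, hL, hrank⟩ i
    exact ⟨_, hL i, exists_diagBlock_eq_rank_le_iff.1 ⟨L, fun _ => rfl, hrank⟩ i⟩
  · intro hblocks
    choose N hN hrank using hblocks
    obtain ⟨L, hL, hrankL⟩ := exists_diagBlock_eq_rank_le_iff.2 hrank
    exact ⟨L, fun i => hL i ▸ hN i, hrankL⟩

theorem mr_sub_udiag_general [Fintype ι] [Nonempty ι] [∀ i, Fintype (m i)] [∀ i, Fintype (n i)]
    (h : IsSubUdiag B ΩB v Ωv M Ω) :
    mr M Ω + firstColZero M Ω = Finset.univ.sup fun i =>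
      mr (augMat (v i) (B i)) (augSet (Ωv i) (ΩB i)) + zeroNat (v i) (Ωv i) (B i) (ΩB i) := by
  refine eq_of_forall_ge_iff fun b => ?_
  cases b with
  | zero =>
    obtain ⟨i⟩ := ‹Nonempty ι›
    have hM := one_le_mr_add_firstColZero M Ω
    have hi := one_le_mr_add_firstColZero (augMat (v i) (B i)) (augSet (Ωv i) (ΩB i))
    rw [← zeroNat_eq_firstColZero] at hi
    exact iff_of_false (by omega) fun hsup => by
      have := Finset.sup_le_iff.1 hsup i (Finset.mem_univ i)
      omega
  | succ s => simp [h.mr_add_firstColZero_le_succ_iff_forall]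

end SubUdiag

/-- Theorem 5: for the partial matrix `M` whose first column is the stacked partial
column `(v₁; …; v_k)` (not a junk column), whose diagonal blocks among the remaining
columns are the partial matrices `Bᵢ`, and all of whose other entries are unknown,
`mr M = maxᵢ (mr [vᵢ | Bᵢ] + zero (vᵢ, Bᵢ))`. -/
theorem mr_sub_udiag {F : Type*} [Field F] {k : ℕ} (hk : 1 ≤ k)
    {mI nI : Fin k → Type*} [∀ i, Fintype (mI i)] [∀ i, Fintype (nI i)]
    (B : ∀ i, Matrix (mI i) (nI i) F) (ΩB : ∀ i, Set (mI i × nI i))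
    (v : ∀ i, mI i → F) (Ωv : ∀ i, Set (mI i))
    (M : Matrix (Σ i, mI i) (Unit ⊕ Σ i, nI i) F)
    (ΩM : Set ((Σ i, mI i) × (Unit ⊕ Σ i, nI i)))
    (hMv : ∀ (i : Fin k) (r : mI i), M ⟨i, r⟩ (Sum.inl ()) = v i r)
    (hMB : ∀ (i : Fin k) (r : mI i) (c : nI i), M ⟨i, r⟩ (Sum.inr ⟨i, c⟩) = B i r c)
    (hΩv : ∀ p : Σ i, mI i, (p, Sum.inl ()) ∈ ΩM ↔ p.2 ∈ Ωv p.1)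
    (hΩB : ∀ (p : Σ i, mI i) (q : Σ i, nI i),
      (p, Sum.inr q) ∈ ΩM ↔ ∃ h : p.1 = q.1, (h ▸ p.2, q.2) ∈ ΩB q.1)
    (hnotjunk : ∃ i, ∃ r ∈ Ωv i, v i r ≠ 0) :
    mr M ΩM = Finset.univ.sup
      (fun i : Fin k =>
        mr (augMat (v i) (B i)) (augSet (Ωv i) (ΩB i)) + zeroNat (v i) (Ωv i) (B i) (ΩB i)) := by
  have : Nonempty (Fin k) := ⟨⟨0, hk⟩⟩
  obtain ⟨i, r, hr, hne⟩ := hnotjunk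
  rw [← mr_sub_udiag_general ⟨hMv, hMB, hΩv, hΩB⟩,
    firstColZero_eq_zero_of_known_ne_zero (i := ⟨i, r⟩) ((hΩv _).2 hr) (hMv i r ▸ hne), add_zero]
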